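/- arXiv:1509.07941 — 2 statements merged into one kernel-verified Lean document; each statement's English description precedes it below -/
import Mathlib

section
/- Fix t > 0. Let j(n) be any sequence of real numbers satisfying j(n) − ( e·√n − (1/4)·log n − (1/2)·log(2πt) − e²/4 − 1/2 ) → 0 as n → ∞. Then λ(n) := Γ(n+1) / ( Γ(j(n)+1)² · Γ(n−j(n)+1) ) → t as n → ∞, where Γ denotes the Gamma function (so that λ(n) = C(n,j)/j! when j is an integer). -/
open scoped Classical
open Filter

noncomputable section

/-- `τ` occurs in `σ` at the strictly increasing positions given by `f`:
`f` is strictly increasing and `σ ∘ f` is order-isomorphic to `τ`. -/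
def OccursAt {m n : ℕ} (τ : Equiv.Perm (Fin m)) (σ : Equiv.Perm (Fin n))
    (f : Fin m → Fin n) : Prop :=
  StrictMono f ∧ ∀ k l, σ (f k) < σ (f l) ↔ τ k < τ l

/-- `τ` occurs in `σ` at the set of positions `α` (listed in increasing order). -/
def OccursOn {m n : ℕ} (τ : Equiv.Perm (Fin m)) (σ : Equiv.Perm (Fin n))
    (α : Finset (Fin n)) : Prop :=
  ∃ f : Fin m → Fin n, StrictMono f ∧ Finset.univ.image f = α ∧
    ∀ k l, σ (f k) < σ (f l) ↔ τ k < τ l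

/-- `τ` occurs in `σ` at the consecutive (0-indexed) positions `i, i+1, …, i+m-1`. -/
def OccursConsec {m n : ℕ} (τ : Equiv.Perm (Fin m)) (σ : Equiv.Perm (Fin n)) (i : ℕ) : Prop :=
  ∃ h : i + m ≤ n, ∀ k l : Fin m,
    σ ⟨i + k, by have := k.isLt; omega⟩ < σ ⟨i + l, by have := l.isLt; omega⟩ ↔ τ k < τ l

/-- The overlap count `L_s(τ)`: the number of permutations of `[2m-s]` containing
two occurrences of `τ` at index sets sharing exactly `s` elements. -/
def overlapCount {m : ℕ} (τ : Equiv.Perm (Fin m)) (s : ℕ) : ℕ :=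
  Set.ncard {ρ : Equiv.Perm (Fin (2 * m - s)) |
    ∃ α β : Finset (Fin (2 * m - s)), α.card = m ∧ β.card = m ∧ (α ∩ β).card = s ∧
      OccursOn τ ρ α ∧ OccursOn τ ρ β}

/-- The sequential overlap count `L̄_s(τ)`: the number of permutations of `[2m-s]` with
occurrences of `τ` at positions `(1,…,m)` and `(m-s+1,…,2m-s)`. -/
def seqOverlapCount {m : ℕ} (τ : Equiv.Perm (Fin m)) (s : ℕ) : ℕ :=
  Set.ncard {ρ : Equiv.Perm (Fin (2 * m - s)) |
    OccursConsec τ ρ 0 ∧ OccursConsec τ ρ (m - s)}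

/-- The number of inversions of a permutation. -/
def invCount {n : ℕ} (σ : Equiv.Perm (Fin n)) : ℕ :=
  (Finset.univ.filter fun p : Fin n × Fin n => p.1 < p.2 ∧ σ p.2 < σ p.1).card

/-- The inversion polynomial `I_n(q) = ∏_{j=1}^n (1 + q + ⋯ + q^{j-1})`. -/
def invPoly (n : ℕ) (q : ℝ) : ℝ :=
  ∏ j ∈ Finset.range n, ∑ i ∈ Finset.range (j + 1), q ^ i

/-- Probability of the event `E` under the uniform distribution on `S_n`. -/
def unifProb {n : ℕ} (E : Set (Equiv.Perm (Fin n))) : ℝ :=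
  (E.ncard : ℝ) / (n.factorial : ℝ)

/-- Probability of the event `E` under the Mallows(q) distribution on `S_n`. -/
def mallowsProb {n : ℕ} (q : ℝ) (E : Set (Equiv.Perm (Fin n))) : ℝ :=
  (∑ σ ∈ Finset.univ.filter (· ∈ E), q ^ invCount σ) / invPoly n q

/-- Expectation of `X` under the uniform distribution on `S_n`. -/
def unifExp {n : ℕ} (X : Equiv.Perm (Fin n) → ℝ) : ℝ :=
  (∑ σ : Equiv.Perm (Fin n), X σ) / (n.factorial : ℝ)

/-- Expectation of `X` under the Mallows(q) distribution on `S_n`. -/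
def mallowsExp {n : ℕ} (q : ℝ) (X : Equiv.Perm (Fin n) → ℝ) : ℝ :=
  (∑ σ : Equiv.Perm (Fin n), X σ * q ^ invCount σ) / invPoly n q

/-- The Poisson(lam) probability mass function. -/
def poissonPMF (lam : ℝ) (k : ℕ) : ℝ :=
  Real.exp (-lam) * lam ^ k / (k.factorial : ℝ)

/-- Total variation distance between the law of the ℕ-valued statistic `W` of a uniformly
random permutation of `[n]` and the Poisson(lam) distribution. -/
def dTVNatUnif {n : ℕ} (W : Equiv.Perm (Fin n) → ℕ) (lam : ℝ) : ℝ :=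
  (1 / 2) * ∑' k : ℕ, |unifProb {σ | W σ = k} - poissonPMF lam k|

/-- Total variation distance between the law of the ℕ-valued statistic `W` of a Mallows(q)
random permutation of `[n]` and the Poisson(lam) distribution. -/
def dTVNatMallows {n : ℕ} (q : ℝ) (W : Equiv.Perm (Fin n) → ℕ) (lam : ℝ) : ℝ :=
  (1 / 2) * ∑' k : ℕ, |mallowsProb q {σ | W σ = k} - poissonPMF lam k|

/-- Total variation distance between the joint law of the indicator family
`(X_α)_{α ∈ I}` of a uniformly random permutation of `[n]` and the joint law of
independent Bernoulli random variables with marginals `p`. -/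
def dTVFamUnif {n : ℕ} {I : Type*} [Fintype I] [DecidableEq I]
    (X : Equiv.Perm (Fin n) → I → Prop) (p : I → ℝ) : ℝ :=
  (1 / 2) * ∑ x : I → Bool,
    |unifProb {σ | ∀ α, X σ α ↔ x α = true} - ∏ α, (if x α then p α else 1 - p α)|

/-- Total variation distance between the joint law of the indicator family
`(X_α)_{α ∈ I}` of a Mallows(q) random permutation of `[n]` and the joint law of
independent Bernoulli random variables with marginals `p`. -/
def dTVFamMallows {n : ℕ} (q : ℝ) {I : Type*} [Fintype I] [DecidableEq I]
    (X : Equiv.Perm (Fin n) → I → Prop) (p : I → ℝ) : ℝ :=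
  (1 / 2) * ∑ x : I → Bool,
    |mallowsProb q {σ | ∀ α, X σ α ↔ x α = true} - ∏ α, (if x α then p α else 1 - p α)|

def stS (x : ℝ) : ℝ := x * Real.log x - x + 1 / 2 * (Real.log (2 * Real.pi) + Real.log x)

theorem st_nat : Tendsto (fun N : ℕ => Real.log (N.factorial : ℝ) - stS N) atTop (nhds 0) := by
  have h1 : Tendsto (fun N : ℕ => Real.log (Stirling.stirlingSeq N)) atTop
      (nhds (Real.log (Real.sqrt Real.pi))) :=
    Stirling.tendsto_stirlingSeq_sqrt_pi.log (by positivity)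
  have h2 := h1.sub_const (Real.log (Real.sqrt Real.pi))
  rw [sub_self] at h2
  refine h2.congr' ?_
  filter_upwards [eventually_ge_atTop 1] with N hN
  have hN' : (0 : ℝ) < N := by exact_mod_cast hN
  rw [Stirling.log_stirlingSeq_formula, Real.log_sqrt Real.pi_pos.le, stS,
    Real.log_mul two_ne_zero hN'.ne', Real.log_mul two_ne_zero Real.pi_pos.ne',
    Real.log_div hN'.ne' (Real.exp_pos 1).ne', Real.log_exp]
  ring

theorem st_bound (x : ℝ) (hx : 2 ≤ x) :
    |(Real.log (Real.Gamma (x + 1)) - stS x) -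
      (Real.log ((⌈x⌉₊).factorial : ℝ) - stS (⌈x⌉₊ : ℝ))| ≤ 2 / (x - 1) := by
  have hN1 : x ≤ (⌈x⌉₊ : ℝ) := Nat.le_ceil x
  have hN2 : (⌈x⌉₊ : ℝ) < x + 1 := Nat.ceil_lt_add_one (by linarith)
  generalize ⌈x⌉₊ = N at *
  have hNr : (2 : ℝ) ≤ N := by linarith
  have hN : 2 ≤ N := by exact_mod_cast hNr
  have hfeq : ∀ {y : ℝ}, 0 < y →
      (Real.log ∘ Real.Gamma) (y + 1) = (Real.log ∘ Real.Gamma) y + Real.log y := by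
    intro y hy
    simp only [Function.comp]
    rw [Real.Gamma_add_one hy.ne', Real.log_mul hy.ne' (Real.Gamma_pos_of_pos hy).ne', add_comm]
  have up := Real.BohrMollerup.f_add_nat_le Real.convexOn_log_Gamma hfeq (n := N) (x := x + 1 - N)
    (by omega) (by linarith) (by linarith)
  have lo := Real.BohrMollerup.f_add_nat_ge Real.convexOn_log_Gamma hfeq (n := N) (x := x + 1 - N)
    hN (by linarith)
  have hG := hfeq (y := (N : ℝ)) (by linarith)
  simp only [Function.comp, add_sub_cancel] at up lo hG
  rw [Real.Gamma_nat_eq_factorial] at hG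
  have e1 : Real.log N - Real.log x ≤ N / x - 1 := by
    rw [← Real.log_div (by linarith) (by linarith)]
    exact Real.log_le_sub_one_of_pos (by apply div_pos <;> linarith)
  have e2 : 1 - x / N ≤ Real.log N - Real.log x := by
    rw [← Real.log_div (by linarith) (by linarith)]
    have := Real.one_sub_inv_le_log_of_pos (x := N / x) (by apply div_pos <;> linarith)
    rwa [inv_div] at this
  have e3 : Real.log N - Real.log (N - 1) ≤ 1 / (N - 1) := by
    rw [← Real.log_div (by linarith) (by linarith)]
    have := Real.log_le_sub_one_of_pos (x := (N : ℝ) / (N - 1)) (by apply div_pos <;> linarith)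
    have h : (N : ℝ) / (N - 1) - 1 = 1 / (N - 1) := by
      have : (N : ℝ) - 1 ≠ 0 := by linarith
      field_simp; ring
    linarith
  have e0 : 0 ≤ Real.log N - Real.log (N - 1) := by
    have := Real.log_le_log (x := (N : ℝ) - 1) (y := N) (by linarith) (by linarith)
    linarith
  have e4 : (1 : ℝ) / (N - 1) ≤ 1 / (x - 1) :=
    one_div_le_one_div_of_le (by linarith) (by linarith)
  have e5 : (1 : ℝ) / x ≤ 1 / (x - 1) := one_div_le_one_div_of_le (by linarith) (by linarith)
  have e6 : (1 : ℝ) / N ≤ 1 / x := one_div_le_one_div_of_le (by linarith) (by linarith)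
  have e7 : 2 / (x - 1) = 2 * (1 / (x - 1)) := by ring
  have p1 : (0 : ℝ) < 1 / x := by apply one_div_pos.2; linarith
  have p2 : (0 : ℝ) < 1 / N := by apply one_div_pos.2; linarith
  have u1 : (x + 1 / 2) * (Real.log N - Real.log x) ≤ (x + 1 / 2) * (N / x - 1) :=
    mul_le_mul_of_nonneg_left e1 (by linarith)
  have u2 : (x + 1 / 2) * (1 - x / N) ≤ (x + 1 / 2) * (Real.log N - Real.log x) :=
    mul_le_mul_of_nonneg_left e2 (by linarith)
  have u3 : (x + 1 / 2) * (N / x - 1) + (x - N) = (N - x) / 2 * (1 / x) := by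
    have : x ≠ 0 := by linarith
    field_simp; ring
  have u4 : (x + 1 / 2) * (1 - x / N) + (x - N) = ((N - x) * (x - N + 1 / 2)) * (1 / N) := by
    have : (N : ℝ) ≠ 0 := by linarith
    field_simp; ring
  have u5 : (N - x) / 2 * (1 / x) ≤ 1 * (1 / x) :=
    mul_le_mul_of_nonneg_right (by linarith) p1.le
  have u6 : (-1) * (1 / (N : ℝ)) ≤ ((N - x) * (x - N + 1 / 2)) * (1 / N) :=
    mul_le_mul_of_nonneg_right (by nlinarith) p2.le
  have u7 : (x + 1 - N) * (Real.log N - Real.log (N - 1)) ≤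
      1 * (Real.log N - Real.log (N - 1)) := mul_le_mul_of_nonneg_right (by linarith) e0
  rw [e7, abs_le]
  unfold stS
  constructor <;> nlinarith

theorem st_real : Tendsto (fun x : ℝ => Real.log (Real.Gamma (x + 1)) - stS x) atTop (nhds 0) := by
  have h1 : Tendsto (fun x : ℝ => Real.log ((⌈x⌉₊).factorial : ℝ) - stS (⌈x⌉₊ : ℝ)) atTop (nhds 0) :=
    st_nat.comp (tendsto_nat_ceil_atTop)
  have h2 : Tendsto (fun x : ℝ => 2 / (x - 1)) atTop (nhds 0) :=
    tendsto_const_nhds.div_atTop (tendsto_atTop_add_const_right _ (-1) tendsto_id)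
  have h3 := squeeze_zero_norm' (a := fun x : ℝ => 2 / (x - 1)) (f := fun x : ℝ =>
    (Real.log (Real.Gamma (x + 1)) - stS x) -
      (Real.log ((⌈x⌉₊).factorial : ℝ) - stS (⌈x⌉₊ : ℝ))) (t₀ := atTop)
    (by filter_upwards [eventually_ge_atTop 2] with x hx using st_bound x hx) h2
  simpa using h3.add h1

theorem lemA {N y : ℝ} (hN : 0 < N) (hy : 0 < y) (hy2 : y ≤ 1 / 2) :
    |N * (1 - y) * Real.log (1 - y) + N * y - N * y ^ 2 / 2| ≤ 3 * (N * y ^ 3) := by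
  have h := Real.abs_log_sub_add_sum_range_le (x := y) (by rw [abs_of_pos hy]; linarith) 2
  rw [abs_of_pos hy] at h
  simp only [Finset.sum_range_succ, Finset.sum_range_zero] at h
  norm_num at h
  have h' : y ^ 3 / (1 - y) ≤ 2 * y ^ 3 := by
    rw [div_le_iff₀ (by linarith)]
    have : 0 < y ^ 3 := by positivity
    nlinarith
  have e : N * (1 - y) * Real.log (1 - y) + N * y - N * y ^ 2 / 2 =
      N * (y ^ 3 / 2) + N * ((1 - y) * (y + y ^ 2 / 2 + Real.log (1 - y))) := by ring
  have hy3 : 0 < y ^ 3 := by positivity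
  have k1 : |(1 - y) * (y + y ^ 2 / 2 + Real.log (1 - y))| ≤ 2 * y ^ 3 := by
    rw [abs_mul, abs_of_pos (by linarith : 0 < 1 - y)]
    have := abs_nonneg (y + y ^ 2 / 2 + Real.log (1 - y))
    nlinarith
  rw [e, ← mul_add, abs_mul, abs_of_pos hN]
  have k2 : |y ^ 3 / 2 + (1 - y) * (y + y ^ 2 / 2 + Real.log (1 - y))| ≤ 3 * y ^ 3 := by
    refine (abs_add_le _ _).trans ?_
    rw [abs_of_pos (by positivity : 0 < y ^ 3 / 2)]
    linarith
  nlinarith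

theorem lemB {z : ℝ} (hz : -1 < z) : |(1 + z) * Real.log (1 + z) - z| ≤ z ^ 2 := by
  have h1 := Real.log_le_sub_one_of_pos (x := 1 + z) (by linarith)
  have h2 := Real.one_sub_inv_le_log_of_pos (x := 1 + z) (by linarith)
  have h3 := mul_le_mul_of_nonneg_left h2 (by linarith : 0 ≤ 1 + z)
  have h4 : (1 + z) * (1 - (1 + z)⁻¹) = z := by
    have : 1 + z ≠ 0 := by linarith
    field_simp; ring
  rw [abs_le]
  constructor <;> nlinarith [sq_nonneg z]

/-- Lemma (McKay): if `j(n) = e·√n − (1/4)·log n − (1/2)·log(2πt) − e²/4 − 1/2 + o(1)`, then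
`λ(n) = Γ(n+1)/(Γ(j(n)+1)²·Γ(n−j(n)+1)) → t`. -/
theorem stmt10 (t : ℝ) (ht : 0 < t) (j : ℕ → ℝ)
    (hj : Filter.Tendsto (fun n : ℕ => j n -
        (Real.exp 1 * Real.sqrt n - (1 / 4) * Real.log n
          - (1 / 2) * Real.log (2 * Real.pi * t) - (Real.exp 1) ^ 2 / 4 - 1 / 2))
      Filter.atTop (nhds 0)) :
    Filter.Tendsto (fun n : ℕ =>
        Real.Gamma ((n : ℝ) + 1) /
          (Real.Gamma (j n + 1) ^ 2 * Real.Gamma ((n : ℝ) - j n + 1)))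
      Filter.atTop (nhds t) := by
  set e := Real.exp 1 with he
  have hepos : 0 < e := Real.exp_pos 1
  have hnat : Tendsto (fun n : ℕ => (n : ℝ)) atTop atTop := tendsto_natCast_atTop_atTop
  have hm : Tendsto (fun n : ℕ => Real.sqrt n) atTop atTop := Real.tendsto_sqrt_atTop.comp hnat
  have hq : Tendsto (fun n : ℕ => Real.sqrt (Real.sqrt n)) atTop atTop :=
    Real.tendsto_sqrt_atTop.comp hm
  -- d / n^(1/4)
  have hlog : Tendsto (fun n : ℕ => Real.log n / Real.sqrt (Real.sqrt n)) atTop (nhds 0) := by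
    have := ((isLittleO_log_rpow_atTop (r := 1 / 4) (by norm_num)).tendsto_div_nhds_zero).comp hnat
    refine this.congr fun n => ?_
    simp only [Function.comp]
    congr 1
    rw [Real.sqrt_eq_rpow, Real.sqrt_eq_rpow, ← Real.rpow_mul (by positivity)]
    norm_num
  have hd : Tendsto (fun n : ℕ => (j n - e * Real.sqrt n) / Real.sqrt (Real.sqrt n)) atTop
      (nhds 0) := by
    have h1 := (hj.sub_const ((1 / 2) * Real.log (2 * Real.pi * t) + e ^ 2 / 4 + 1 / 2)).div_atTop hq
    have h2 := h1.sub (hlog.const_mul (1 / 4))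
    simp only [mul_zero, sub_zero] at h2
    refine h2.congr fun n => ?_
    ring
  -- z = d / (e m)
  have hz : Tendsto (fun n : ℕ => (j n - e * Real.sqrt n) / (e * Real.sqrt n)) atTop (nhds 0) := by
    have h1 := (hd.div_atTop hq).div_const e
    rw [zero_div] at h1
    refine h1.congr fun n => ?_
    rw [div_div, div_div, ← mul_assoc, Real.mul_self_sqrt (Real.sqrt_nonneg _), mul_comm e]
  have hmz : Tendsto (fun n : ℕ => (e * Real.sqrt n) *
      ((j n - e * Real.sqrt n) / (e * Real.sqrt n)) ^ 2) atTop (nhds 0) := by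
    have h1 := (hd.pow 2).div_const e
    simp only [ne_eq, OfNat.ofNat_ne_zero, not_false_eq_true, zero_pow, zero_div] at h1
    refine h1.congr' ?_
    filter_upwards [hm.eventually_gt_atTop 0] with n hn
    rw [div_pow, Real.sq_sqrt (Real.sqrt_nonneg _)]
    field_simp
  have hjm : Tendsto (fun n : ℕ => j n / Real.sqrt n) atTop (nhds e) := by
    have h1 := (hz.const_mul e).add_const e
    simp only [mul_zero, zero_add] at h1
    refine h1.congr' ?_
    filter_upwards [hm.eventually_gt_atTop 0] with n hn
    field_simp; ring
  have hjtop : Tendsto j atTop atTop := by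
    have h1 := hjm.pos_mul_atTop hepos hm
    refine h1.congr' ?_
    filter_upwards [hm.eventually_gt_atTop 0] with n hn
    field_simp
  have hy : Tendsto (fun n : ℕ => j n / n) atTop (nhds 0) := by
    refine (hjm.div_atTop hm).congr fun n => ?_
    rw [div_div, Real.mul_self_sqrt (Nat.cast_nonneg n)]
  have hnj : Tendsto (fun n : ℕ => (n : ℝ) - j n) atTop atTop := by
    have h1 := (hy.const_sub 1).pos_mul_atTop (by norm_num) hnat
    refine h1.congr' ?_
    filter_upwards [hnat.eventually_gt_atTop 0] with n hn
    field_simp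
  have hj2 : Tendsto (fun n : ℕ => (j n) ^ 2 / n) atTop (nhds (e ^ 2)) := by
    refine (hjm.pow 2).congr fun n => ?_
    rw [div_pow, Real.sq_sqrt (Nat.cast_nonneg n)]
  have hny3 : Tendsto (fun n : ℕ => (n : ℝ) * (j n / n) ^ 3) atTop (nhds 0) := by
    have h1 := hj2.mul hy
    rw [mul_zero] at h1
    refine h1.congr' ?_
    filter_upwards [hnat.eventually_gt_atTop 0] with n hn
    field_simp
  have hysmall : ∀ᶠ n : ℕ in atTop, j n / n ≤ 1 / 2 := hy.eventually_le_const (by norm_num)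
  have hA : Tendsto (fun n : ℕ => (n : ℝ) * (1 - j n / n) * Real.log (1 - j n / n) + n * (j n / n)
      - n * (j n / n) ^ 2 / 2) atTop (nhds 0) := by
    refine squeeze_zero_norm' ?_ (by simpa using hny3.const_mul 3)
    filter_upwards [hnat.eventually_gt_atTop 0, hjtop.eventually_gt_atTop 0, hysmall] with n h1 h2 h3
    exact lemA h1 (div_pos h2 h1) h3
  have hB : Tendsto (fun n : ℕ => (e * Real.sqrt n) *
      ((1 + (j n - e * Real.sqrt n) / (e * Real.sqrt n)) *
        Real.log (1 + (j n - e * Real.sqrt n) / (e * Real.sqrt n)) -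
        (j n - e * Real.sqrt n) / (e * Real.sqrt n))) atTop (nhds 0) := by
    refine squeeze_zero_norm' ?_ hmz
    filter_upwards [hz.eventually_const_lt (show (-1 : ℝ) < 0 by norm_num)] with n hn
    rw [norm_mul, Real.norm_eq_abs, Real.norm_eq_abs, abs_of_nonneg (by positivity)]
    exact mul_le_mul_of_nonneg_left (lemB hn) (by positivity)
  have ha : Tendsto (fun n : ℕ => Real.log (1 - j n / n)) atTop (nhds 0) := by
    have := (hy.const_sub 1).log (by norm_num)
    simpa using this
  have hb : Tendsto (fun n : ℕ => Real.log (1 + (j n - e * Real.sqrt n) / (e * Real.sqrt n)))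
      atTop (nhds 0) := by
    have := (hz.const_add 1).log (by norm_num)
    simpa using this
  have hS : Tendsto (fun n : ℕ => stS n - 2 * stS (j n) - stS (n - j n)) atTop
      (nhds (Real.log t)) := by
    have h := ((((((hB.const_mul 2).add hb).add hA).add (ha.const_mul (1 / 2))).add
      ((hj2.sub_const (e ^ 2)).const_mul (1 / 2))).add (hj.const_mul 2)).const_sub (Real.log t)
    simp only [mul_zero, add_zero, sub_zero, sub_self] at h
    refine h.congr' ?_
    filter_upwards [hnat.eventually_gt_atTop 0, hjtop.eventually_gt_atTop 0,
      hnj.eventually_gt_atTop 0, hm.eventually_gt_atTop 0] with n h1 h2 h3 h4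
    have l1 : Real.log (1 - j n / n) = Real.log (n - j n) - Real.log n := by
      rw [← Real.log_div h3.ne' h1.ne', sub_div, div_self h1.ne']
    have q1 : 1 + (j n - e * Real.sqrt n) / (e * Real.sqrt n) = j n / (e * Real.sqrt n) := by
      field_simp; ring
    have l2 : Real.log (j n / (e * Real.sqrt n)) = Real.log (j n) - 1 - Real.log n / 2 := by
      rw [Real.log_div h2.ne' (by positivity), Real.log_mul hepos.ne' h4.ne', he, Real.log_exp,
        Real.log_sqrt h1.le]
      ring
    have l3 : Real.log (2 * Real.pi * t) = Real.log (2 * Real.pi) + Real.log t :=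
      Real.log_mul (by positivity) ht.ne'
    rw [q1, l1, l2, l3]
    unfold stS
    field_simp
    ring
  have hE := ((st_real.comp hnat).sub ((st_real.comp hjtop).const_mul 2)).sub (st_real.comp hnj)
  have hL := hE.add hS
  simp only [mul_zero, sub_zero, zero_add] at hL
  have hX := (Real.continuous_exp.tendsto _).comp hL
  rw [Real.exp_log ht] at hX
  refine hX.congr' ?_
  filter_upwards [hnat.eventually_gt_atTop 0, hjtop.eventually_gt_atTop 0,
      hnj.eventually_gt_atTop 0] with n h1 h2 h3
  have g1 := Real.Gamma_pos_of_pos (show 0 < (n : ℝ) + 1 by linarith)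
  have g2 := Real.Gamma_pos_of_pos (show 0 < j n + 1 by linarith)
  have g3 := Real.Gamma_pos_of_pos (show 0 < (n : ℝ) - j n + 1 by linarith)
  have hp : 0 < Real.Gamma ((n : ℝ) + 1) /
          (Real.Gamma (j n + 1) ^ 2 * Real.Gamma ((n : ℝ) - j n + 1)) := by positivity
  rw [← Real.exp_log hp, Real.log_div g1.ne' (by positivity), Real.log_mul (by positivity) g3.ne',
    Real.log_pow]
  simp only [Function.comp]
  congr 1
  push_cast
  ring

end
end

section
/- Fix q > 0, let Σ_n be a random permutation of [n] from the Mallows(q) distribution, let m ≥ 2 with n ≥ 2m, and let τ_m = 12⋯m be the increasing pattern. Let W be the number of blocks of m consecutive indices α = {i, …, i+m−1} ⊆ [n] on which the values of Σ_n are increasing, and let Y be a Poisson random variable with mean equal to E W. Then d_TV( L(W), L(Y) ) ≤ 2·(b_1 + b_2), where b_1 = n_1/I_m(q)², b_2 = n_2·Σ_{s=1}^{m−1} 1/I_{2m−s}(q), n_1 = 2mn − 3m² + m, and n_2 = 3m − 3m² − 2n + 2mn. -/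
open scoped Classical
open Filter

noncomputable section

def blk {m n : ℕ} (i : ℕ) (h : i + m ≤ n) : Fin m ↪ Fin n :=
  ⟨fun k => ⟨i + k, by have := k.isLt; omega⟩, fun a b hab => by
    simp only [Fin.mk.injEq] at hab
    exact Fin.ext (by omega)⟩

lemma blk_val {m n : ℕ} (i : ℕ) (h : i + m ≤ n) (k : Fin m) : (blk i h k : ℕ) = i + k := rfl

lemma blk_lt {m n : ℕ} (i : ℕ) (h : i + m ≤ n) (k l : Fin m) : blk i h k < blk i h l ↔ k < l := by
  rw [Fin.lt_def, Fin.lt_def, blk_val, blk_val]; omega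

lemma blk_range {m n : ℕ} (i : ℕ) (h : i + m ≤ n) (x : Fin n) :
    x ∈ Set.range (blk i h) ↔ i ≤ x ∧ (x : ℕ) < i + m := by
  constructor
  · rintro ⟨k, rfl⟩
    have := k.isLt
    rw [blk_val]; omega
  · rintro ⟨h1, h2⟩
    exact ⟨⟨x - i, by omega⟩, Fin.ext (by rw [blk_val]; simp only; omega)⟩

lemma occ_iff {m n : ℕ} (σ : Equiv.Perm (Fin n)) (i : ℕ) (h : i + m ≤ n) :
    OccursConsec (Equiv.refl (Fin m)) σ i ↔ StrictMono (fun k => σ (blk i h k)) := by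
  constructor
  · rintro ⟨_, h2⟩ a b hab
    exact (h2 a b).2 hab
  · intro hs
    exact ⟨h, fun k l => hs.lt_iff_lt⟩

lemma via_mem {m n : ℕ} (i : ℕ) (h : i + m ≤ n) (ρ : Equiv.Perm (Fin m)) (x : Fin n) :
    ρ.viaEmbedding (blk i h) x ∈ Set.range (blk i h) ↔ x ∈ Set.range (blk i h) := by
  by_cases hx : x ∈ Set.range (blk i h)
  · refine ⟨fun _ => hx, fun _ => ?_⟩
    obtain ⟨k, rfl⟩ := hx
    rw [Equiv.Perm.viaEmbedding_apply]
    exact ⟨_, rfl⟩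
  · rw [Equiv.Perm.viaEmbedding_apply_of_notMem _ _ _ hx]

lemma via_lt {m n : ℕ} (i : ℕ) (h : i + m ≤ n) (ρ : Equiv.Perm (Fin m)) (x y : Fin n)
    (hxy : ¬ (x ∈ Set.range (blk i h) ∧ y ∈ Set.range (blk i h))) :
    ρ.viaEmbedding (blk i h) x < ρ.viaEmbedding (blk i h) y ↔ x < y := by
  have hx' := via_mem i h ρ x
  have hy' := via_mem i h ρ y
  have ax := Equiv.Perm.viaEmbedding_apply_of_notMem ρ (blk i h) x
  have ay := Equiv.Perm.viaEmbedding_apply_of_notMem ρ (blk i h) y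
  generalize ρ.viaEmbedding (blk i h) x = x' at *
  generalize ρ.viaEmbedding (blk i h) y = y' at *
  rw [blk_range, blk_range] at hx' hy' hxy
  rw [blk_range] at ax ay
  rw [Fin.lt_def, Fin.lt_def]
  rw [Fin.ext_iff] at ax ay
  omega

lemma inv_add {m n : ℕ} (i : ℕ) (h : i + m ≤ n) (σ : Equiv.Perm (Fin n)) (ρ : Equiv.Perm (Fin m))
    (hs : StrictMono (fun k => σ (blk i h k))) :
    invCount (σ * ρ.viaEmbedding (blk i h)) = invCount σ + invCount ρ := by
  set R := ρ.viaEmbedding (blk i h) with hR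
  let B : Fin n × Fin n → Prop := fun p => p.1 ∈ Set.range (blk i h) ∧ p.2 ∈ Set.range (blk i h)
  unfold invCount
  rw [← Finset.card_filter_add_card_filter_not
    (s := Finset.univ.filter fun p : Fin n × Fin n => p.1 < p.2 ∧ (σ * R) p.2 < (σ * R) p.1) B]
  have e1 : ((Finset.univ.filter fun p : Fin n × Fin n =>
      p.1 < p.2 ∧ (σ * R) p.2 < (σ * R) p.1).filter B).card =
      (Finset.univ.filter fun p : Fin m × Fin m => p.1 < p.2 ∧ ρ p.2 < ρ p.1).card := by
    symm
    refine Finset.card_bij (fun p _ => (blk i h p.1, blk i h p.2)) ?_ ?_ ?_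
    · rintro ⟨a, b⟩ hab
      simp only [Finset.mem_filter, Finset.mem_univ, true_and] at hab ⊢
      refine ⟨⟨(blk_lt _ _ _ _).2 hab.1, ?_⟩, ⟨a, rfl⟩, ⟨b, rfl⟩⟩
      simp only [Equiv.Perm.mul_apply, hR, Equiv.Perm.viaEmbedding_apply]
      exact hs hab.2
    · rintro ⟨a, b⟩ _ ⟨c, d⟩ _ hh
      simpa using hh
    · rintro ⟨a, b⟩ hab
      simp only [Finset.mem_filter, Finset.mem_univ, true_and] at hab
      obtain ⟨⟨h1, h2⟩, ⟨a, rfl⟩, ⟨b, rfl⟩⟩ := hab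
      simp only [Equiv.Perm.mul_apply, hR, Equiv.Perm.viaEmbedding_apply] at h2
      refine ⟨(a, b), ?_, rfl⟩
      simp only [Finset.mem_filter, Finset.mem_univ, true_and]
      exact ⟨(blk_lt _ _ _ _).1 h1, hs.lt_iff_lt.1 h2⟩
  have e2 : ((Finset.univ.filter fun p : Fin n × Fin n =>
      p.1 < p.2 ∧ (σ * R) p.2 < (σ * R) p.1).filter (fun p => ¬ B p)).card =
      (Finset.univ.filter fun p : Fin n × Fin n => p.1 < p.2 ∧ σ p.2 < σ p.1).card := by
    refine Finset.card_bij (fun p _ => (R p.1, R p.2)) ?_ ?_ ?_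
    · rintro ⟨a, b⟩ hab
      simp only [Finset.mem_filter, Finset.mem_univ, true_and] at hab ⊢
      exact ⟨(via_lt i h ρ a b hab.2).2 hab.1.1, hab.1.2⟩
    · rintro ⟨a, b⟩ _ ⟨c, d⟩ _ hh
      simpa using hh
    · rintro ⟨a, b⟩ hab
      simp only [Finset.mem_filter, Finset.mem_univ, true_and] at hab
      obtain ⟨a, rfl⟩ := R.surjective a
      obtain ⟨b, rfl⟩ := R.surjective b
      refine ⟨(a, b), ?_, rfl⟩
      simp only [Finset.mem_filter, Finset.mem_univ, true_and]
      have hnB : ¬ B (a, b) := by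
        rintro ⟨⟨k, hk⟩, ⟨l, hl⟩⟩
        simp only at hk hl
        subst hk; subst hl
        simp only [hR, Equiv.Perm.viaEmbedding_apply, blk_lt] at hab
        exact lt_asymm hab.2 (hs hab.1)
      exact ⟨⟨(via_lt i h ρ a b hnB).1 hab.1, hab.2⟩, hnB⟩
  rw [e1, e2, add_comm]

lemma sort_unique {m n : ℕ} (i : ℕ) (h : i + m ≤ n) (σ : Equiv.Perm (Fin n)) :
    ∃! ρ : Equiv.Perm (Fin m), StrictMono (fun k => σ (blk i h (ρ⁻¹ k))) := by
  have hinj : Function.Injective (fun k => σ (blk i h k)) :=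
    fun a b hab => (blk i h).injective (σ.injective hab)
  refine ⟨(Tuple.sort (fun k => σ (blk i h k)))⁻¹, ?_, ?_⟩
  · simp only [inv_inv]
    exact (Tuple.monotone_sort (fun k => σ (blk i h k))).strictMono_of_injective
      (hinj.comp (Equiv.injective _))
  · intro ρ hρ
    have h2 := (Tuple.monotone_sort (fun k => σ (blk i h k))).strictMono_of_injective
      (hinj.comp (Equiv.injective _))
    have := (StrictMono.range_inj hρ h2).1 (by
      rw [(Tuple.sort _).surjective.range_comp]
      exact (ρ⁻¹).surjective.range_comp (fun k => σ (blk i h k)))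
    rw [← inv_inj, inv_inv]
    ext k
    have hk := hinj (congrFun this k)
    rw [hk]

def Zq (m : ℕ) (q : ℝ) : ℝ := ∑ ρ : Equiv.Perm (Fin m), q ^ invCount ρ

lemma block_Z {m n : ℕ} (q : ℝ) (i : ℕ) (h : i + m ≤ n) (g : Equiv.Perm (Fin n) → ℝ)
    (hg : ∀ σ ρ, g (σ * Equiv.Perm.viaEmbedding ρ (blk (m := m) i h)) = g σ) :
    ∑ σ, g σ * q ^ invCount σ = Zq m q *
      ∑ σ, (if OccursConsec (Equiv.refl (Fin m)) σ i then g σ else 0) * q ^ invCount σ := by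
  have step : ∀ σ : Equiv.Perm (Fin n), g σ * q ^ invCount σ =
      ∑ ρ : Equiv.Perm (Fin m), if StrictMono (fun k => σ (blk i h (ρ⁻¹ k))) then
        g σ * q ^ invCount σ else 0 := by
    intro σ
    obtain ⟨ρ, h1, h2⟩ := sort_unique i h σ
    rw [Finset.sum_eq_single ρ, if_pos h1]
    · intro b _ hb
      exact if_neg fun hh => hb (h2 b hh)
    · simp
  rw [Finset.sum_congr rfl fun σ _ => step σ, Finset.sum_comm, Zq, Finset.sum_mul]
  refine Finset.sum_congr rfl fun ρ _ => ?_
  rw [Finset.mul_sum, ← Equiv.sum_comp (Equiv.mulRight (ρ.viaEmbedding (blk i h)))]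
  refine Finset.sum_congr rfl fun σ _ => ?_
  simp only [Equiv.coe_mulRight, Equiv.Perm.mul_apply, Equiv.Perm.viaEmbedding_apply,
    ← Equiv.Perm.mul_apply ρ, mul_inv_cancel, Equiv.Perm.one_apply]
  rw [occ_iff σ i h]
  split_ifs with hs
  · rw [hg, inv_add i h σ ρ hs, pow_add]; ring
  · simp

lemma inv_cycle {n : ℕ} (k : Fin (n + 1)) : invCount (k.cycleRange.symm) = k := by
  have : (Finset.univ.filter fun p : Fin (n+1) × Fin (n+1) => p.1 < p.2 ∧
      k.cycleRange.symm p.2 < k.cycleRange.symm p.1) =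
      (Finset.univ.filter fun j : Fin n => (j : ℕ) < k).map
        ⟨fun j => ((0 : Fin (n+1)), j.succ), fun a b hab => by simpa using hab⟩ := by
    ext ⟨a, b⟩
    simp only [Finset.mem_filter, Finset.mem_univ, true_and, Finset.mem_map]
    constructor
    · rintro ⟨h1, h2⟩
      obtain ⟨b, rfl⟩ := Fin.exists_succ_eq.2 (Fin.ne_zero_of_lt h1)
      by_cases ha : a = 0
      · subst ha
        rw [Fin.cycleRange_symm_succ, Fin.cycleRange_symm_zero,
          Fin.succAbove_lt_iff_castSucc_lt] at h2
        exact ⟨b, h2, rfl⟩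
      · obtain ⟨a, rfl⟩ := Fin.exists_succ_eq.2 ha
        rw [Fin.cycleRange_symm_succ, Fin.cycleRange_symm_succ] at h2
        have := (Fin.strictMono_succAbove k).lt_iff_lt.1 h2
        exact absurd (Fin.succ_lt_succ_iff.1 h1) (lt_asymm this)
    · rintro ⟨j, hj, he⟩
      replace he : ((0 : Fin (n+1)), j.succ) = (a, b) := he
      rw [Prod.mk.injEq] at he
      obtain ⟨rfl, rfl⟩ := he
      refine ⟨Fin.succ_pos _, ?_⟩
      rw [Fin.cycleRange_symm_succ, Fin.cycleRange_symm_zero,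
        Fin.succAbove_lt_iff_castSucc_lt]
      exact hj
  unfold invCount
  rw [this, Finset.card_map]
  rw [Fin.card_filter_val_lt]
  have := k.isLt
  omega

lemma Zq_succ (n : ℕ) (q : ℝ) : Zq (n + 1) q = Zq n q * ∑ i ∈ Finset.range (n + 1), q ^ i := by
  have hb := block_Z (m := n) (n := n + 1) q 1 (by omega) (fun _ => 1) (fun _ _ => rfl)
  simp only [one_mul] at hb
  rw [Zq, hb]
  congr 1
  simp only [ite_mul, one_mul, zero_mul]
  rw [← Finset.sum_filter, ← Fin.sum_univ_eq_sum_range (fun i => q ^ i)]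
  symm
  have hblk : ∀ j : Fin n, blk (m := n) (n := n + 1) 1 (by omega) j = j.succ := by
    intro j
    apply Fin.ext
    rw [blk_val, Fin.val_succ, add_comm]
  refine Finset.sum_bij (fun k _ => k.cycleRange.symm) ?_ ?_ ?_ ?_
  · intro k _
    simp only [Finset.mem_filter, Finset.mem_univ, true_and]
    rw [occ_iff _ 1 (by omega)]
    simp only [hblk, Fin.cycleRange_symm_succ]
    exact Fin.strictMono_succAbove k
  · intro a _ b _ hab
    have := congrArg (fun e : Equiv.Perm (Fin (n+1)) => e 0) hab
    simpa only [Fin.cycleRange_symm_zero] using this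
  · intro σ hσ
    simp only [Finset.mem_filter, Finset.mem_univ, true_and] at hσ
    rw [occ_iff _ 1 (by omega)] at hσ
    simp only [hblk] at hσ
    refine ⟨σ 0, Finset.mem_univ _, ?_⟩
    have key := (StrictMono.range_inj (Fin.strictMono_succAbove (σ 0)) hσ).1 (by
      rw [Fin.range_succAbove]
      ext x
      simp only [Set.mem_compl_iff, Set.mem_singleton_iff, Set.mem_range]
      constructor
      · intro hx
        obtain ⟨y, rfl⟩ := σ.surjective x
        have hy : y ≠ 0 := fun h => hx (by rw [h])
        obtain ⟨z, rfl⟩ := Fin.exists_succ_eq.2 hy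
        exact ⟨z, rfl⟩
      · rintro ⟨y, rfl⟩ h
        exact Fin.succ_ne_zero y (σ.injective h))
    apply Equiv.ext
    intro x
    refine Fin.cases ?_ (fun j => ?_) x
    · exact Fin.cycleRange_symm_zero _
    · rw [Fin.cycleRange_symm_succ]
      exact congrFun key j
  · intro k _
    rw [inv_cycle]

lemma Zq_eq (n : ℕ) (q : ℝ) : Zq n q = invPoly n q := by
  induction n with
  | zero => simp [Zq, invPoly, invCount]
  | succ n ih => rw [Zq_succ, ih, invPoly, invPoly, Finset.prod_range_succ]

lemma invPoly_pos (n : ℕ) (q : ℝ) (hq : 0 < q) : 0 < invPoly n q :=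
  Finset.prod_pos fun j _ => Finset.sum_pos (fun i _ => pow_pos hq i) ⟨0, by simp⟩

def occI (m : ℕ) {n : ℕ} (i : ℕ) (σ : Equiv.Perm (Fin n)) : ℝ :=
  if OccursConsec (Equiv.refl (Fin m)) σ i then 1 else 0

/-- expectation of an occurrence times an invariant function -/
lemma Ex_block {m n : ℕ} (q : ℝ) (hq : 0 < q) (i : ℕ) (h : i + m ≤ n)
    (g : Equiv.Perm (Fin n) → ℝ)
    (hg : ∀ σ ρ, g (σ * Equiv.Perm.viaEmbedding ρ (blk (m := m) i h)) = g σ) :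
    mallowsExp q (fun σ => occI m i σ * g σ) = 1 / invPoly m q * mallowsExp q g := by
  have hb := block_Z q i h g hg
  rw [Zq_eq] at hb
  have := invPoly_pos m q hq
  unfold mallowsExp
  rw [hb]
  simp only [occI, ite_mul, one_mul, zero_mul]
  field_simp

lemma Ex_one {n : ℕ} (q : ℝ) (hq : 0 < q) : mallowsExp (n := n) q (fun _ => 1) = 1 := by
  have := invPoly_pos n q hq
  have h2 := Zq_eq n q
  unfold Zq at h2
  unfold mallowsExp
  simp only [one_mul]
  rw [h2]
  field_simp

lemma Ex_occ {m n : ℕ} (q : ℝ) (hq : 0 < q) (i : ℕ) (h : i + m ≤ n) :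
    mallowsExp (n := n) q (occI m i) = 1 / invPoly m q := by
  have := Ex_block (m := m) (n := n) q hq i h (fun _ => 1) (fun _ _ => rfl)
  rw [Ex_one q hq] at this
  simpa using this

lemma occ_union {m n : ℕ} (σ : Equiv.Perm (Fin n)) (i d : ℕ) (hd : d < m)
    (h : i + d + m ≤ n) (h1 : OccursConsec (Equiv.refl (Fin m)) σ i)
    (h2 : OccursConsec (Equiv.refl (Fin m)) σ (i + d)) :
    OccursConsec (Equiv.refl (Fin (m + d))) σ i := by
  rw [occ_iff σ _ (by omega)] at h1 h2 ⊢
  have key : ∀ k (hk : k + 1 < m + d), σ ⟨i + k, by omega⟩ < σ ⟨i + (k + 1), by omega⟩ := by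
    intro k hk
    by_cases hkm : k + 1 < m
    · exact h1 (a := ⟨k, by omega⟩) (b := ⟨k + 1, hkm⟩) (by simp)
    · have := h2 (a := ⟨k - d, by omega⟩) (b := ⟨k - d + 1, by omega⟩) (by simp)
      have e1 : blk (m := m) (i + d) h ⟨k - d, by omega⟩ = ⟨i + k, by omega⟩ :=
        Fin.ext (by rw [blk_val]; simp only; omega)
      have e2 : blk (m := m) (i + d) h ⟨k - d + 1, by omega⟩ = ⟨i + (k + 1), by omega⟩ :=
        Fin.ext (by rw [blk_val]; simp only; omega)
      simpa only [e1, e2] using this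
  have key2 : ∀ t k (hk : k + t + 1 < m + d),
      σ ⟨i + k, by omega⟩ < σ ⟨i + (k + t + 1), by omega⟩ := by
    intro t
    induction t with
    | zero => exact key
    | succ t ih => 
      intro k hk
      exact (ih k (by omega)).trans (key (k + t + 1) hk)
  intro a b hab
  have := key2 (b - a - 1) a (by have := b.isLt; rw [Fin.lt_def] at hab; omega)
  have e : (⟨i + (a + (b - a - 1) + 1), by have := b.isLt; rw [Fin.lt_def] at hab; omega⟩ : Fin n) =
      blk i (by omega) b := Fin.ext (by rw [blk_val]; rw [Fin.lt_def] at hab; simp only; omega)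
  rw [e] at this
  exact this

lemma Ex_mono {n : ℕ} (q : ℝ) (hq : 0 < q) {f g : Equiv.Perm (Fin n) → ℝ} (h : ∀ σ, f σ ≤ g σ) :
    mallowsExp q f ≤ mallowsExp q g := by
  have := invPoly_pos n q hq
  unfold mallowsExp
  gcongr with σ
  exact h σ

lemma Ex_add {n : ℕ} (q : ℝ) (f g : Equiv.Perm (Fin n) → ℝ) :
    mallowsExp q (fun σ => f σ + g σ) = mallowsExp q f + mallowsExp q g := by
  unfold mallowsExp
  rw [← add_div, ← Finset.sum_add_distrib]
  simp only [add_mul]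

lemma Ex_sub {n : ℕ} (q : ℝ) (f g : Equiv.Perm (Fin n) → ℝ) :
    mallowsExp q (fun σ => f σ - g σ) = mallowsExp q f - mallowsExp q g := by
  unfold mallowsExp
  rw [← sub_div, ← Finset.sum_sub_distrib]
  simp only [sub_mul]

lemma Ex_smul {n : ℕ} (q c : ℝ) (f : Equiv.Perm (Fin n) → ℝ) :
    mallowsExp q (fun σ => c * f σ) = c * mallowsExp q f := by
  unfold mallowsExp
  rw [mul_div_assoc', Finset.mul_sum]
  simp only [mul_assoc]

lemma Ex_sum {n : ℕ} {ι : Type} (q : ℝ) (s : Finset ι) (f : ι → Equiv.Perm (Fin n) → ℝ) :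
    mallowsExp q (fun σ => ∑ i ∈ s, f i σ) = ∑ i ∈ s, mallowsExp q (f i) := by
  unfold mallowsExp
  rw [← Finset.sum_div, Finset.sum_comm]
  simp only [Finset.sum_mul]

lemma occ_comm_aux {m n : ℕ} (q : ℝ) (hq : 0 < q) (i d : ℕ) (hd : d < m) (h : i + d + m ≤ n) :
    mallowsExp (n := n) q (fun σ => occI m i σ * occI m (i + d) σ) ≤ 1 / invPoly (m + d) q := by
  rw [← Ex_occ (m := m + d) (n := n) q hq i (by omega)]
  refine Ex_mono q hq fun σ => ?_
  unfold occI
  by_cases h1 : OccursConsec (Equiv.refl (Fin m)) σ i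
  · by_cases h2 : OccursConsec (Equiv.refl (Fin m)) σ (i + d)
    · rw [if_pos (occ_union σ i d hd h h1 h2), if_pos h1, if_pos h2]; norm_num
    · rw [if_neg h2, mul_zero]; split_ifs <;> norm_num
  · rw [if_neg h1, zero_mul]; split_ifs <;> norm_num

lemma occ_invariant {m n : ℕ} (i : ℕ) (h : i + m ≤ n) (j : ℕ) (hj : j + m ≤ n)
    (hij : j + m ≤ i ∨ i + m ≤ j) (σ : Equiv.Perm (Fin n)) (ρ : Equiv.Perm (Fin m)) :
    OccursConsec (Equiv.refl (Fin m)) (σ * ρ.viaEmbedding (blk i h)) j ↔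
      OccursConsec (Equiv.refl (Fin m)) σ j := by
  rw [occ_iff _ j hj, occ_iff _ j hj]
  have : ∀ k, ρ.viaEmbedding (blk i h) (blk (m := m) j hj k) = blk j hj k := by
    intro k
    apply Equiv.Perm.viaEmbedding_apply_of_notMem
    rw [blk_range, blk_val]
    have := k.isLt
    omega
  simp only [Equiv.Perm.mul_apply, this]

lemma pois_pos (lam : ℝ) (hl : 0 < lam) (k : ℕ) : 0 < poissonPMF lam k := by
  unfold poissonPMF; positivity

lemma pois_rec (lam : ℝ) (k : ℕ) :
    ((k : ℝ) + 1) * poissonPMF lam (k + 1) = lam * poissonPMF lam k := by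
  unfold poissonPMF
  rw [Nat.factorial_succ]
  push_cast
  have : (k.factorial : ℝ) ≠ 0 := by positivity
  field_simp
  ring

lemma pois_hasSum (lam : ℝ) (hl : 0 < lam) : HasSum (poissonPMF lam) 1 :=
  ProbabilityTheory.hasSum_one_poissonMeasure ⟨lam, hl.le⟩

def poisF (lam : ℝ) (k : ℕ) : ℝ := ∑ i ∈ Finset.range (k + 1), poissonPMF lam i

lemma poisF_succ (lam : ℝ) (k : ℕ) : poisF lam (k + 1) = poisF lam k + poissonPMF lam (k + 1) :=
  Finset.sum_range_succ _ _

lemma poisF_ge (lam : ℝ) (hl : 0 < lam) (k : ℕ) : poissonPMF lam 0 ≤ poisF lam k := by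
  unfold poisF
  exact Finset.single_le_sum (f := poissonPMF lam) (fun i _ => (pois_pos lam hl i).le) (by simp)

lemma poisF_bound (lam : ℝ) (hl : 0 < lam) (k : ℕ) :
    lam * poisF lam k ≤ (k + 1) * (poisF lam (k + 1) - poissonPMF lam 0) := by
  induction k with
  | zero =>
    have := pois_rec lam 0
    simp [poisF, Finset.sum_range_succ] at *
    linarith
  | succ k ih =>
    have h1 := pois_rec lam (k + 1)
    have h2 := poisF_ge lam hl (k + 1)
    have h3 := poisF_succ lam (k + 1)
    have h4 := poisF_succ lam k
    push_cast at *
    nlinarith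

lemma poisF_tail (lam : ℝ) (hl : 0 < lam) (k : ℕ) :
    (k + 1) * (1 - poisF lam (k + 1)) ≤ lam * (1 - poisF lam k) := by
  have hs := pois_hasSum lam hl
  have t : ∀ k, 1 - poisF lam k = ∑' i, poissonPMF lam (i + (k + 1)) := by
    intro k
    have := hs.summable.sum_add_tsum_nat_add (k + 1)
    rw [hs.tsum_eq] at this
    unfold poisF
    linarith
  rw [t, t, ← tsum_mul_left, ← tsum_mul_left]
  have s1 := (summable_nat_add_iff (k + 1)).2 hs.summable
  have s2 := (summable_nat_add_iff (k + 1 + 1)).2 hs.summable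
  refine Summable.tsum_le_tsum (fun i => ?_) (s2.mul_left _) (s1.mul_left _)
  have h1 := pois_rec lam (i + (k + 1))
  rw [← h1]
  have := pois_pos lam hl (i + (k + 1) + 1)
  have e : i + (k + 1 + 1) = i + (k + 1) + 1 := by ring
  rw [e]
  gcongr
  push_cast
  have : (0 : ℝ) ≤ i := by positivity
  linarith

def steinA (lam : ℝ) (A : Finset ℕ) (k : ℕ) : ℝ :=
  ∑ i ∈ Finset.range (k + 1), if i ∈ A then poissonPMF lam i else 0

def poisA (lam : ℝ) (A : Finset ℕ) : ℝ := ∑ i ∈ A, poissonPMF lam i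

def steinG (lam : ℝ) (A : Finset ℕ) (k : ℕ) : ℝ :=
  (steinA lam A k - poisA lam A * poisF lam k) / (lam * poissonPMF lam k)

lemma hasSum_A (lam : ℝ) (A : Finset ℕ) :
    HasSum (fun i => if i ∈ A then poissonPMF lam i else 0) (poisA lam A) := by
  have : poisA lam A = ∑ i ∈ A, if i ∈ A then poissonPMF lam i else 0 :=
    Finset.sum_congr rfl fun i hi => by rw [if_pos hi]
  rw [this]
  exact hasSum_sum_of_ne_finset_zero fun i hi => if_neg hi

lemma steinA_le (lam : ℝ) (hl : 0 < lam) (A : Finset ℕ) (k : ℕ) :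
    steinA lam A k ≤ poisA lam A :=
  sum_le_hasSum _ (fun i _ => by have := pois_pos lam hl i; split_ifs <;> linarith) (hasSum_A lam A)

lemma steinA_nonneg (lam : ℝ) (hl : 0 < lam) (A : Finset ℕ) (k : ℕ) :
    0 ≤ steinA lam A k :=
  Finset.sum_nonneg (fun i _ => by have := pois_pos lam hl i; split_ifs <;> linarith)

lemma steinA_le_F (lam : ℝ) (hl : 0 < lam) (A : Finset ℕ) (k : ℕ) :
    steinA lam A k ≤ poisF lam k :=
  Finset.sum_le_sum (fun i _ => by have := pois_pos lam hl i; split_ifs <;> linarith)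

lemma steinA_compl (lam : ℝ) (hl : 0 < lam) (A : Finset ℕ) (k : ℕ) :
    poisF lam k - steinA lam A k ≤ 1 - poisA lam A := by
  unfold poisF steinA
  rw [← Finset.sum_sub_distrib]
  exact sum_le_hasSum _ (fun i _ => by have := pois_pos lam hl i; split_ifs <;> linarith)
    ((pois_hasSum lam hl).sub (hasSum_A lam A))

lemma steinA_succ (lam : ℝ) (A : Finset ℕ) (k : ℕ) :
    steinA lam A (k + 1) = steinA lam A k + if k + 1 ∈ A then poissonPMF lam (k + 1) else 0 :=
  Finset.sum_range_succ _ _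

lemma stein_eq (lam : ℝ) (hl : 0 < lam) (A : Finset ℕ) (k : ℕ) :
    lam * steinG lam A k - k * steinG lam A (k - 1) = (if k ∈ A then 1 else 0) - poisA lam A := by
  cases k with
  | zero =>
    have := pois_pos lam hl 0
    simp only [steinG, steinA, poisF, Finset.sum_range_one, zero_add, CharP.cast_eq_zero, zero_mul,
      sub_zero]
    split_ifs <;> field_simp <;> ring
  | succ k =>
    have h0 := pois_pos lam hl k
    have h1 := pois_pos lam hl (k + 1)
    have hr := pois_rec lam k
    simp only [Nat.add_sub_cancel]
    rw [steinG, steinG, ← hr, steinA_succ, poisF_succ]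
    push_cast
    have : (k : ℝ) + 1 ≠ 0 := by positivity
    split_ifs <;> field_simp <;> ring

lemma stein_alg (lam a c PA F P P' r p0 : ℝ) (ha : 0 ≤ a) (haF : a ≤ F) (hP' : 0 < P')
    (hc : c = 0 ∨ c = 1) (h1 : a + c * P' ≤ PA)
    (h2 : (F + P') - (a + c * P') ≤ 1 - PA)
    (h3 : 1 - (F + P') ≤ r * (1 - F)) (h4 : r * F ≤ F + P' - p0) (h5 : 1 - p0 ≤ lam)
    (hr : 0 ≤ r) (hp0 : 0 < p0) :
    |a + c * P' - PA * (F + P') - (a - PA * F) * r| ≤ lam * P' := by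
  obtain ⟨b, hb⟩ : ∃ b, PA = a + c * P' + b := ⟨PA - (a + c * P'), by ring⟩
  subst hb
  have hb0 : 0 ≤ b := by linarith
  have hb1 : b ≤ 1 - (F + P') := by linarith
  have hu : 1 - (F + P') + r * F ≤ lam := by linarith
  have hu0 : 0 ≤ 1 - (F + P') + r * F := by
    have : 0 ≤ r * F := mul_nonneg hr (ha.trans haF)
    linarith
  have e : a + c * P' - (a + c * P' + b) * (F + P') - (a - (a + c * P' + b) * F) * r =
      - a * (r * (1 - F) - (1 - (F + P'))) + c * P' * (1 - (F + P') + r * F)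
        - b * ((F + P') - r * F) := by ring
  rw [e, abs_le]
  have x1 : 0 ≤ a * (r * (1 - F) - (1 - (F + P'))) := mul_nonneg ha (by linarith)
  have x2 : a * (r * (1 - F) - (1 - (F + P'))) ≤ F * (r * (1 - F) - (1 - (F + P'))) :=
    mul_le_mul_of_nonneg_right haF (by linarith)
  have y1 : 0 ≤ b * ((F + P') - r * F) := mul_nonneg hb0 (by linarith)
  have y2 : b * ((F + P') - r * F) ≤ (1 - (F + P')) * ((F + P') - r * F) :=
    mul_le_mul_of_nonneg_right hb1 (by linarith)
  have z : P' * (1 - (F + P') + r * F) ≤ P' * lam := mul_le_mul_of_nonneg_left hu hP'.le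
  have z0 : 0 ≤ P' * (1 - (F + P') + r * F) := mul_nonneg hP'.le hu0
  rcases hc with rfl | rfl <;> constructor <;> nlinarith

lemma stein_lip1 (lam : ℝ) (hl : 0 < lam) (A : Finset ℕ) (k : ℕ) :
    |steinG lam A (k + 1) - steinG lam A k| ≤ 1 := by
  have h0 := pois_pos lam hl k
  have h1 := pois_pos lam hl (k + 1)
  have hr := pois_rec lam k
  have hk : (0 : ℝ) < (k : ℝ) + 1 := by positivity
  have hP : poissonPMF lam (k + 1) = lam / (k + 1) * poissonPMF lam k := by
    field_simp; linarith
  obtain ⟨c, hc, hcA⟩ : ∃ c : ℝ, (c = 0 ∨ c = 1) ∧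
      (if k + 1 ∈ A then poissonPMF lam (k + 1) else 0) = c * poissonPMF lam (k + 1) := by
    split_ifs
    · exact ⟨1, Or.inr rfl, by ring⟩
    · exact ⟨0, Or.inl rfl, by ring⟩
  have s1 := steinA_le lam hl A (k + 1)
  have s2 := steinA_compl lam hl A (k + 1)
  have s3 := poisF_tail lam hl k
  have s4 := poisF_bound lam hl k
  have s5 : 1 - poissonPMF lam 0 ≤ lam := by
    have := Real.add_one_le_exp (-lam)
    simp [poissonPMF]
    linarith
  rw [steinA_succ, hcA] at s1 s2
  rw [poisF_succ] at s2 s3 s4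
  have key := stein_alg lam (steinA lam A k) c (poisA lam A) (poisF lam k) (poissonPMF lam k)
    (poissonPMF lam (k + 1)) (lam / (k + 1)) (poissonPMF lam 0) (steinA_nonneg lam hl A k)
    (steinA_le_F lam hl A k) h1 hc s1 s2
    (by rw [div_mul_eq_mul_div, le_div_iff₀ hk]; linarith)
    (by rw [div_mul_eq_mul_div, div_le_iff₀ hk]; linarith) s5 (by positivity) (pois_pos lam hl 0)
  have e : steinG lam A (k + 1) - steinG lam A k =
      (steinA lam A k + c * poissonPMF lam (k + 1) -
        poisA lam A * (poisF lam k + poissonPMF lam (k + 1)) -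
        (steinA lam A k - poisA lam A * poisF lam k) * (lam / (k + 1))) /
        (lam * poissonPMF lam (k + 1)) := by
    rw [steinG, steinG, steinA_succ, hcA, poisF_succ, sub_div _ _ (lam * poissonPMF lam (k + 1))]
    congr 1
    rw [hP]
    field_simp
  rw [e, abs_div, abs_of_pos (a := lam * poissonPMF lam (k + 1)) (by positivity)]
  rw [div_le_one (by positivity)]
  exact key

lemma stein_lip (lam : ℝ) (hl : 0 < lam) (A : Finset ℕ) (k d : ℕ) :
    |steinG lam A (k + d) - steinG lam A k| ≤ d := by
  induction d with
  | zero => simp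
  | succ d ih =>
    have := stein_lip1 lam hl A (k + d)
    have e : steinG lam A (k + (d + 1)) - steinG lam A k =
      (steinG lam A (k + d + 1) - steinG lam A (k + d)) +
      (steinG lam A (k + d) - steinG lam A k) := by rw [← add_assoc]; ring
    rw [e]
    refine (abs_add_le _ _).trans ?_
    push_cast
    linarith

lemma tv_eq (lam : ℝ) (hl : 0 < lam) (M : ℕ) (p : ℕ → ℝ) (hp : ∀ k, M ≤ k → p k = 0)
    (hs : ∑ k ∈ Finset.range M, p k = 1) :
    ∃ A : Finset ℕ, (1 / 2) * ∑' k, |p k - poissonPMF lam k| =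
      ∑ k ∈ A, p k - poisA lam A := by
  refine ⟨(Finset.range M).filter fun k => poissonPMF lam k ≤ p k, ?_⟩
  set A := (Finset.range M).filter fun k => poissonPMF lam k ≤ p k with hA
  have hP := pois_hasSum lam hl
  have hp1 : HasSum p 1 := by
    rw [← hs]
    exact hasSum_sum_of_ne_finset_zero fun k hk => hp k (by simpa using hk)
  have hAs : HasSum (fun k => if k ∈ A then p k - poissonPMF lam k else 0)
      (∑ k ∈ A, p k - poisA lam A) := by
    have : ∑ k ∈ A, p k - poisA lam A = ∑ k ∈ A, if k ∈ A then p k - poissonPMF lam k else 0 := by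
      unfold poisA
      rw [← Finset.sum_sub_distrib]
      exact Finset.sum_congr rfl fun i hi => by rw [if_pos hi]
    rw [this]
    exact hasSum_sum_of_ne_finset_zero fun i hi => if_neg hi
  have tot := (hAs.mul_left 2).sub (hp1.sub hP)
  have e : (fun k => |p k - poissonPMF lam k|) =
      fun k => 2 * (if k ∈ A then p k - poissonPMF lam k else 0) - (p k - poissonPMF lam k) := by
    funext k
    by_cases hk : k ∈ A
    · rw [if_pos hk, abs_of_nonneg]
      · ring
      · rw [hA, Finset.mem_filter] at hk
        linarith [hk.2]
    · rw [if_neg hk, abs_of_nonpos]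
      · ring
      · by_cases hM : M ≤ k
        · rw [hp k hM]; linarith [pois_pos lam hl k]
        · rw [hA, Finset.mem_filter, Finset.mem_range] at hk
          have : ¬ poissonPMF lam k ≤ p k := fun h => hk ⟨by omega, h⟩
          linarith
  rw [e, tot.tsum_eq]
  ring

def nearS (N m i : ℕ) : Finset ℕ := (Finset.range N).filter fun j => ¬ (j + m ≤ i ∨ i + m ≤ j)

def farS (N m i : ℕ) : Finset ℕ := (Finset.range N).filter fun j => j + m ≤ i ∨ i + m ≤ j

def farV (N m : ℕ) {n : ℕ} (i : ℕ) (σ : Equiv.Perm (Fin n)) : ℕ :=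
  ((farS N m i).filter fun j => OccursConsec (Equiv.refl (Fin m)) σ j).card

def nearV (N m : ℕ) {n : ℕ} (i : ℕ) (σ : Equiv.Perm (Fin n)) : ℕ :=
  ((nearS N m i).filter fun j => OccursConsec (Equiv.refl (Fin m)) σ j).card

def totW (N m : ℕ) {n : ℕ} (σ : Equiv.Perm (Fin n)) : ℕ :=
  ((Finset.range N).filter fun j => OccursConsec (Equiv.refl (Fin m)) σ j).card

lemma sum_occI {n : ℕ} (m : ℕ) (s : Finset ℕ) (σ : Equiv.Perm (Fin n)) :
    ((s.filter fun j => OccursConsec (Equiv.refl (Fin m)) σ j).card : ℝ) =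
      ∑ j ∈ s, occI m j σ := by
  unfold occI
  rw [Finset.sum_boole]

lemma W_split (N m : ℕ) {n : ℕ} (i : ℕ) (σ : Equiv.Perm (Fin n)) :
    totW N m σ = farV N m i σ + nearV N m i σ := by
  unfold totW farV nearV farS nearS
  rw [Finset.filter_comm, ← Finset.card_filter_add_card_filter_not
    (s := (Finset.range N).filter fun j => OccursConsec (Equiv.refl (Fin m)) σ j)
    (fun j => j + m ≤ i ∨ i + m ≤ j)]
  congr 2
  rw [Finset.filter_comm]

lemma farV_inv (N m : ℕ) {n : ℕ} (hN : N + m ≤ n + 1) (i : ℕ) (h : i + m ≤ n)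
    (σ : Equiv.Perm (Fin n)) (ρ : Equiv.Perm (Fin m)) :
    farV N m i (σ * ρ.viaEmbedding (blk i h)) = farV N m i σ := by
  unfold farV
  congr 1
  refine Finset.filter_congr fun j hj => ?_
  rw [farS, Finset.mem_filter, Finset.mem_range] at hj
  exact occ_invariant i h j (by omega) hj.2 σ ρ

lemma near_mem (N m i : ℕ) (hi : i < N) (hm : 0 < m) : i ∈ nearS N m i := by
  rw [nearS, Finset.mem_filter, Finset.mem_range]
  omega

lemma near_card (N m i : ℕ) (hm : 0 < m) : (nearS N m i).card ≤ 2 * m - 1 := by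
  have : nearS N m i ⊆ Finset.Ico (i + 1 - m) (i + m) := by
    intro j hj
    rw [nearS, Finset.mem_filter, Finset.mem_range] at hj
    rw [Finset.mem_Ico]
    omega
  refine (Finset.card_le_card this).trans ?_
  rw [Nat.card_Ico]
  omega

lemma step_i (q : ℝ) (hq : 0 < q) (N m n : ℕ) (hm : 0 < m) (hN : N + m ≤ n + 1) (i : ℕ) (hi : i < N)
    (lam : ℝ) (hl : 0 < lam) (A : Finset ℕ) :
    1 / invPoly m q * mallowsExp (n := n) q (fun σ => steinG lam A (totW N m σ)) -
      mallowsExp (n := n) q (fun σ => occI m i σ * steinG lam A (totW N m σ - 1)) ≤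
    (2 * m - 1) * (1 / invPoly m q) ^ 2 +
      ∑ j ∈ (nearS N m i).erase i, mallowsExp (n := n) q (fun σ => occI m i σ * occI m j σ) := by
  have hI := invPoly_pos m q hq
  have hp : 0 ≤ 1 / invPoly m q := by positivity
  have h1 : mallowsExp (n := n) q (fun σ => steinG lam A (totW N m σ)) ≤
      mallowsExp (n := n) q (fun σ => steinG lam A (farV N m i σ)) +
      ∑ j ∈ nearS N m i, mallowsExp (n := n) q (fun σ => occI m j σ) := by
    rw [← Ex_sum, ← Ex_add]
    refine Ex_mono q hq fun σ => ?_
    rw [W_split N m i σ, ← sum_occI]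
    have := (abs_le.1 (stein_lip lam hl A (farV N m i σ) (nearV N m i σ))).2
    change _ ≤ _ + (nearV N m i σ : ℝ)
    linarith
  have h2 : mallowsExp (n := n) q (fun σ => occI m i σ * steinG lam A (farV N m i σ)) ≤
      mallowsExp (n := n) q (fun σ => occI m i σ * steinG lam A (totW N m σ - 1)) +
      ∑ j ∈ (nearS N m i).erase i, mallowsExp (n := n) q (fun σ => occI m i σ * occI m j σ) := by
    rw [← Ex_sum, ← Ex_add]
    refine Ex_mono q hq fun σ => ?_
    rw [← Finset.mul_sum, W_split N m i σ]
    by_cases ho : OccursConsec (Equiv.refl (Fin m)) σ i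
    · have e : occI m i σ = 1 := if_pos ho
      have hs := Finset.add_sum_erase (nearS N m i) (fun j => occI m j σ) (near_mem N m i hi hm)
      rw [← sum_occI m (nearS N m i)] at hs
      simp only [e] at hs
      change _ = (nearV N m i σ : ℝ) at hs
      have hnv : 1 ≤ nearV N m i σ :=
        Finset.card_pos.2 ⟨i, Finset.mem_filter.2 ⟨near_mem N m i hi hm, ho⟩⟩
      obtain ⟨d, hd⟩ : ∃ d, nearV N m i σ = d + 1 := ⟨nearV N m i σ - 1, by omega⟩
      have := (abs_le.1 (stein_lip lam hl A (farV N m i σ) d)).1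
      rw [hd] at hs ⊢
      push_cast at hs
      rw [e, show farV N m i σ + (d + 1) - 1 = farV N m i σ + d by omega]
      linarith
    · have e : occI m i σ = 0 := if_neg ho
      simp [e]
  have h3 := Ex_block (m := m) (n := n) q hq i (by omega) (fun σ => steinG lam A (farV N m i σ))
    (fun σ ρ => by rw [farV_inv N m hN])
  have h4 : ∑ j ∈ nearS N m i, mallowsExp (n := n) q (fun σ => occI m j σ) ≤
      (2 * m - 1) * (1 / invPoly m q) := by
    have : ∀ j ∈ nearS N m i, mallowsExp (n := n) q (fun σ => occI m j σ) = 1 / invPoly m q := by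
      intro j hj
      rw [nearS, Finset.mem_filter, Finset.mem_range] at hj
      exact Ex_occ q hq j (by omega)
    rw [Finset.sum_congr rfl this, Finset.sum_const, nsmul_eq_mul]
    gcongr
    have hc := near_card N m i hm
    have : ((nearS N m i).card : ℝ) + 1 ≤ 2 * m := by
      exact_mod_cast (by omega : (nearS N m i).card + 1 ≤ 2 * m)
    linarith
  rw [h3] at h2
  have h5 := mul_le_mul_of_nonneg_left (h1.trans (add_le_add_right h4 _)) hp
  nlinarith

lemma pair_bound (N m : ℕ) (c : ℕ → ℝ) (hc : ∀ d, 0 ≤ c d) (hN : 1 ≤ N) :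
    ∑ i ∈ Finset.range N, ∑ j ∈ (Finset.range N).filter (fun j => i < j ∧ j < i + m), c (j - i) ≤
      (N - 1) * ∑ d ∈ Finset.Icc 1 (m - 1), c d := by
  obtain ⟨M, rfl⟩ : ∃ M, N = M + 1 := ⟨N - 1, by omega⟩
  rw [Finset.sum_range_succ]
  have e : (Finset.range (M + 1)).filter (fun j => M < j ∧ j < M + m) = ∅ := by
    ext j
    simp only [Finset.mem_filter, Finset.mem_range, Finset.notMem_empty, iff_false]
    omega
  rw [e, Finset.sum_empty, add_zero]
  have : ∀ i ∈ Finset.range M, ∑ j ∈ (Finset.range (M + 1)).filter (fun j => i < j ∧ j < i + m),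
      c (j - i) ≤ ∑ d ∈ Finset.Icc 1 (m - 1), c d := by
    intro i _
    rw [← Finset.sum_image (f := c) (g := fun j => j - i)]
    · refine Finset.sum_le_sum_of_subset_of_nonneg ?_ (fun d _ _ => hc d)
      intro d hd
      simp only [Finset.mem_image, Finset.mem_filter, Finset.mem_range] at hd
      rw [Finset.mem_Icc]
      omega
    · intro a ha b hb hab
      simp only [Finset.coe_filter, Finset.mem_range, Set.mem_ofPred_eq] at ha hb
      simp only at hab
      omega
  refine (Finset.sum_le_sum this).trans ?_
  rw [Finset.sum_const, Finset.card_range, nsmul_eq_mul]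
  push_cast
  simp

lemma near_pairs (q : ℝ) (hq : 0 < q) (N m n : ℕ) (hN : N + m ≤ n + 1) (hN1 : 1 ≤ N) :
    ∑ i ∈ Finset.range N, ∑ j ∈ (nearS N m i).erase i,
      mallowsExp (n := n) q (fun σ => occI m i σ * occI m j σ) ≤
    2 * ((N - 1) * ∑ d ∈ Finset.Icc 1 (m - 1), 1 / invPoly (m + d) q) := by
  have hc : ∀ d, 0 ≤ 1 / invPoly (m + d) q := fun d => by
    have := invPoly_pos (m + d) q hq
    positivity
  have pb := pair_bound N m (fun d => 1 / invPoly (m + d) q) hc hN1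
  set E : ℕ → ℕ → ℝ := fun i j => mallowsExp (n := n) q (fun σ => occI m i σ * occI m j σ) with hE
  have hsym : ∀ i j, E i j = E j i := by
    intro i j
    simp only [hE, mul_comm]
  have hb : ∑ i ∈ Finset.range N,
      ∑ j ∈ (Finset.range N).filter (fun j => i < j ∧ j < i + m), E i j ≤
      (N - 1) * ∑ d ∈ Finset.Icc 1 (m - 1), 1 / invPoly (m + d) q := by
    refine (Finset.sum_le_sum fun i _ => Finset.sum_le_sum fun j hj => ?_).trans pb
    simp only [Finset.mem_filter, Finset.mem_range] at hj
    have := occ_comm_aux (m := m) (n := n) q hq i (j - i) (by omega) (by omega)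
    rw [show i + (j - i) = j by omega] at this
    exact this
  have hsplit : ∀ i ∈ Finset.range N, ∑ j ∈ (nearS N m i).erase i, E i j =
      ∑ j ∈ (Finset.range N).filter (fun j => i < j ∧ j < i + m), E i j +
      ∑ j ∈ (Finset.range N).filter (fun j => j < i ∧ i < j + m), E i j := by
    intro i _
    rw [← Finset.sum_union]
    · refine Finset.sum_congr ?_ fun _ _ => rfl
      ext j
      simp only [nearS, Finset.mem_erase, Finset.mem_union, Finset.mem_filter, Finset.mem_range]
      omega
    · rw [Finset.disjoint_left]
      intro j h1 h2
      simp only [Finset.mem_filter, Finset.mem_range] at h1 h2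
      omega
  have hsw : ∑ i ∈ Finset.range N,
      ∑ j ∈ (Finset.range N).filter (fun j => j < i ∧ i < j + m), E i j =
      ∑ i ∈ Finset.range N,
      ∑ j ∈ (Finset.range N).filter (fun j => i < j ∧ j < i + m), E i j := by
    simp only [Finset.sum_filter]
    rw [Finset.sum_comm]
    refine Finset.sum_congr rfl fun i _ => Finset.sum_congr rfl fun j _ => ?_
    rw [hsym]
  rw [Finset.sum_congr rfl hsplit, Finset.sum_add_distrib, hsw]
  linarith

lemma Ex_prob {n : ℕ} (q : ℝ) (S : Set (Equiv.Perm (Fin n))) :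
    mallowsProb q S = mallowsExp q (fun σ => if σ ∈ S then 1 else 0) := by
  unfold mallowsProb mallowsExp
  rw [Finset.sum_filter]
  simp only [ite_mul, one_mul, zero_mul]

lemma sum_prob {n : ℕ} (q : ℝ) (W : Equiv.Perm (Fin n) → ℕ) (A : Finset ℕ) :
    ∑ k ∈ A, mallowsProb q {σ | W σ = k} = mallowsExp q (fun σ => if W σ ∈ A then 1 else 0) := by
  simp only [Ex_prob]
  rw [← Ex_sum]
  congr 1
  funext σ
  simp only [Set.mem_ofPred_eq]
  by_cases h : W σ ∈ A
  · rw [if_pos h, Finset.sum_eq_single (W σ)] <;> simp +contextual [h, eq_comm]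
  · rw [if_neg h]
    exact Finset.sum_eq_zero fun x hx => if_neg fun e : W σ = x => h (e ▸ hx)

/-- Proposition: Poisson approximation for the number of increasing blocks of `m`
consecutive positions of a Mallows(q) permutation of `[n]`. -/
theorem stmt16 (q : ℝ) (hq : 0 < q) (n m : ℕ) (hm : 2 ≤ m) (hn : 2 * m ≤ n)
    (W : Equiv.Perm (Fin n) → ℕ)
    (hW : ∀ σ, W σ = ((Finset.range (n - m + 1)).filter fun i =>
        OccursConsec (Equiv.refl (Fin m)) σ i).card)
    (EW b1 b2 : ℝ)
    (hEW : EW = mallowsExp q fun σ => (W σ : ℝ))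
    (hb1 : b1 = (2 * (m : ℝ) * (n : ℝ) - 3 * (m : ℝ) ^ 2 + (m : ℝ)) / (invPoly m q) ^ 2)
    (hb2 : b2 = (3 * (m : ℝ) - 3 * (m : ℝ) ^ 2 - 2 * (n : ℝ) + 2 * (m : ℝ) * (n : ℝ))
        * ∑ s ∈ Finset.Icc 1 (m - 1), 1 / invPoly (2 * m - s) q) :
    dTVNatMallows q W EW ≤ 2 * (b1 + b2) := by
  obtain ⟨N, hNdef⟩ : ∃ N, N = n - m + 1 := ⟨_, rfl⟩
  have hWt : W = fun σ => totW N m σ := by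
    funext σ
    rw [hW σ, hNdef]
    rfl
  have hI := invPoly_pos m q hq
  set p := 1 / invPoly m q with hp
  have hp0 : 0 < p := by positivity
  have hNr : (N : ℝ) = n - m + 1 := by
    rw [hNdef]; push_cast [Nat.cast_sub (by omega : m ≤ n)]; ring
  have hWs : ∀ σ : Equiv.Perm (Fin n), (totW N m σ : ℝ) = ∑ i ∈ Finset.range N, occI m i σ :=
    fun σ => sum_occI m _ σ
  have hEWp : EW = N * p := by
    rw [hEW, hWt]
    simp only [hWs]
    rw [Ex_sum, Finset.sum_congr rfl (g := fun _ => p), Finset.sum_const, Finset.card_range,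
      nsmul_eq_mul]
    intro i hi
    rw [Finset.mem_range] at hi
    exact Ex_occ q hq i (by omega)
  have hl : 0 < EW := by
    rw [hEWp, hNdef]
    positivity
  have hWle : ∀ σ : Equiv.Perm (Fin n), totW N m σ ≤ N := fun σ => by
    unfold totW
    exact (Finset.card_filter_le _ _).trans (by simp)
  obtain ⟨A, hA⟩ := tv_eq EW hl (N + 1) (fun k => mallowsProb q {σ | W σ = k})
    (by
      intro k hk
      have : {σ | W σ = k} = ∅ := by
        ext σ
        rw [hWt]
        have := hWle σ
        simp only [Set.mem_ofPred_eq, Set.mem_empty_iff_false, iff_false]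
        omega
      simp only [this]
      simp [mallowsProb])
    (by
      rw [sum_prob]
      refine Eq.trans ?_ (Ex_one (n := n) q hq)
      congr 1
      funext σ
      rw [hWt, if_pos]
      have := hWle σ
      exact Finset.mem_range.2 (Nat.lt_succ_of_le this))
  unfold dTVNatMallows
  rw [hA, sum_prob]
  have hst : mallowsExp q (fun σ => if W σ ∈ A then (1 : ℝ) else 0) - poisA EW A =
      ∑ i ∈ Finset.range N, (p * mallowsExp (n := n) q (fun σ => steinG EW A (totW N m σ)) -
      mallowsExp (n := n) q (fun σ => occI m i σ * steinG EW A (totW N m σ - 1))) := by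
    have hone : poisA EW A = mallowsExp (n := n) q (fun _ => poisA EW A * 1) := by
      rw [Ex_smul, Ex_one q hq, mul_one]
    rw [hone, ← Ex_sub, Finset.sum_sub_distrib, Finset.sum_const, Finset.card_range, nsmul_eq_mul,
      ← mul_assoc, ← hEWp, ← Ex_smul, ← Ex_sum, ← Ex_sub]
    congr 1
    funext σ
    rw [← Finset.sum_mul, ← hWs, mul_one, stein_eq EW hl A, hWt]
  rw [hst]
  refine (Finset.sum_le_sum fun i hi => step_i q hq N m n (by omega) (by omega) i
    (Finset.mem_range.1 hi) EW hl A).trans ?_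
  rw [Finset.sum_add_distrib, Finset.sum_const, Finset.card_range, nsmul_eq_mul]
  have hpairs := near_pairs q hq N m n (by omega) (by omega)
  have hre : ∑ d ∈ Finset.Icc 1 (m - 1), 1 / invPoly (m + d) q =
      ∑ s ∈ Finset.Icc 1 (m - 1), 1 / invPoly (2 * m - s) q := by
    refine Finset.sum_bij' (fun d _ => m - d) (fun d _ => m - d) ?_ ?_ ?_ ?_ ?_ <;>
      intro d hd <;> rw [Finset.mem_Icc] at hd
    · rw [Finset.mem_Icc]; omega
    · rw [Finset.mem_Icc]; omega
    · omega
    · omega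
    · rw [show 2 * m - (m - d) = m + d by omega]
  rw [hre] at hpairs
  have hS : 0 ≤ ∑ s ∈ Finset.Icc 1 (m - 1), 1 / invPoly (2 * m - s) q :=
    Finset.sum_nonneg fun s _ => by
      have := invPoly_pos (2 * m - s) q hq
      positivity
  have hmr : (2 : ℝ) ≤ m := by exact_mod_cast hm
  have hnr : 2 * (m : ℝ) ≤ n := by exact_mod_cast hn
  have c1 : (N : ℝ) * (2 * m - 1) ≤ 2 * (2 * m * n - 3 * m ^ 2 + m) := by
    rw [hNr]; nlinarith
  have c2 : (N : ℝ) - 1 ≤ 3 * m - 3 * m ^ 2 - 2 * n + 2 * m * n := by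
    rw [hNr]; nlinarith
  have d1 := mul_le_mul_of_nonneg_right c1 (sq_nonneg p)
  have d2 := mul_le_mul_of_nonneg_right c2 hS
  have e1 : b1 = (2 * (m : ℝ) * (n : ℝ) - 3 * (m : ℝ) ^ 2 + (m : ℝ)) * p ^ 2 := by
    rw [hb1, hp]; field_simp
  rw [hb2, e1]
  rw [← hp]
  linarith

end
end
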